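/- Let a, b > 0, let E := {(u,v) ∈ ℝ² : u²/a² + v²/b² ≤ 1} be a solid ellipse, and let n ≥ 3 be an integer. Then the minimal area of a convex polygon with at most n vertices containing E is inf{ Area(convexHull(S)) : S ⊂ ℝ² finite, |S| ≤ n, E ⊆ convexHull(S) } = n·a·b·tan(π/n); consequently δ_c(n) := this infimum − Area(E) equals n·a·b·tan(π/n) − π·a·b. -/

import Mathlib

open MeasureTheory

def dot2 (f p : ℝ × ℝ) : ℝ := f.1 * p.1 + f.2 * p.2

def disc2 (R : ℝ) : Set (ℝ × ℝ) := {p | p.1 ^ 2 + p.2 ^ 2 ≤ R ^ 2}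

def cap2 (R : ℝ) (f : ℝ × ℝ) : Set (ℝ × ℝ) := {p | p ∈ disc2 R ∧ 1 < dot2 f p}

lemma dot2_lin (f : ℝ × ℝ) : IsLinearMap ℝ (fun p => dot2 f p) :=
  ⟨fun x y => by simp [dot2]; ring, fun c x => by simp [dot2]; ring⟩

lemma dot2_comm (f g : ℝ × ℝ) : dot2 f g = dot2 g f := by simp [dot2]; ring

lemma dot2_cont (f : ℝ × ℝ) : Continuous (fun p => dot2 f p) := by
  unfold dot2; fun_prop

lemma hull_dot_le (S : Set (ℝ × ℝ)) (f : ℝ × ℝ) (c : ℝ) (h : ∀ s ∈ S, dot2 f s ≤ c) :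
    ∀ p ∈ convexHull ℝ S, dot2 f p ≤ c :=
  fun _ hp => convexHull_min (t := {p | dot2 f p ≤ c}) h (convex_halfSpace_le (dot2_lin f) c) hp

lemma dual_rep (g : StrongDual ℝ (ℝ × ℝ)) : ∃ f : ℝ × ℝ, ∀ p, g p = dot2 f p := by
  refine ⟨(g (1, 0), g (0, 1)), fun p => ?_⟩
  have : p = p.1 • ((1 : ℝ), (0 : ℝ)) + p.2 • ((0 : ℝ), (1 : ℝ)) := by ext <;> simp
  conv_lhs => rw [this]
  rw [map_add, map_smul, map_smul]
  simp [dot2]; ring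

lemma polar_bdd (f : ℝ × ℝ) (h : ∀ p ∈ disc2 1, dot2 f p ≤ 1) : f.1 ^ 2 + f.2 ^ 2 ≤ 1 := by
  by_contra! hc
  set r := Real.sqrt (f.1 ^ 2 + f.2 ^ 2) with hr
  have hr2 : r ^ 2 = f.1 ^ 2 + f.2 ^ 2 := Real.sq_sqrt (by positivity)
  have hr1 : 1 < r := by rw [hr]; exact Real.lt_sqrt_of_sq_lt (by simpa using hc)
  have h0 : r ≠ 0 := by positivity
  have := h (f.1 / r, f.2 / r) (by
    simp only [disc2, Set.mem_ofPred_eq]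
    rw [div_pow, div_pow, ← add_div, ← hr2]; simp [h0])
  simp only [dot2] at this
  have e : f.1 * (f.1 / r) + f.2 * (f.2 / r) = r := by
    field_simp; linarith
  linarith

lemma extreme_tight (S : Finset (ℝ × ℝ)) (f : ℝ × ℝ)
    (hf : f ∈ Set.extremePoints ℝ {f : ℝ × ℝ | ∀ s ∈ S, dot2 f s ≤ 1}) :
    ∃ v ∈ S, ∃ w ∈ S, dot2 f v = 1 ∧ dot2 f w = 1 ∧ 0 < v.1 * w.2 - v.2 * w.1 := by
  by_contra! hc
  obtain ⟨g, hg0, hg⟩ : ∃ g : ℝ × ℝ, g ≠ 0 ∧ ∀ s ∈ S, dot2 f s = 1 → dot2 g s = 0 := by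
    by_cases ht : ∃ t ∈ S, dot2 f t = 1
    · obtain ⟨t, htS, ht⟩ := ht
      refine ⟨(-t.2, t.1), ?_, fun s hs h1 => ?_⟩
      · intro h
        simp only [Prod.mk_eq_zero, neg_eq_zero] at h
        simp [dot2, h.1, h.2] at ht
      · have h1' := hc t htS s hs ht h1
        have h2 := hc s hs t htS h1 ht
        simp only [dot2]; linarith
    · push Not at ht
      exact ⟨(1, 0), by simp, fun s hs h => absurd h (ht s hs)⟩
  rw [mem_extremePoints] at hf
  obtain ⟨hfK, hext⟩ := hf
  have hev : ∀ᶠ e : ℝ in nhdsWithin 0 (Set.Ioi 0), ∀ s ∈ S, e * |dot2 g s| ≤ 1 - dot2 f s := by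
    rw [Filter.eventually_all_finset]
    intro s hs
    rcases (hfK s hs).eq_or_lt with h | h
    · simp [h, hg s hs h]
    · apply Filter.Eventually.filter_mono nhdsWithin_le_nhds
      have : Filter.Tendsto (fun e : ℝ => e * |dot2 g s|) (nhds 0) (nhds 0) := by
        have : Continuous (fun e : ℝ => e * |dot2 g s|) := by fun_prop
        simpa using this.tendsto 0
      exact (this.eventually_lt_const (sub_pos.2 h)).mono fun _ => le_of_lt
  obtain ⟨e, he, hpos⟩ := (hev.and self_mem_nhdsWithin).exists
  have hpos : 0 < e := hpos
  have := hext (f + e • g) (fun s hs => ?_) (f - e • g) (fun s hs => ?_) ?_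
  · have h1 := this.1
    simp [hpos.ne', hg0] at h1
  · have := he s hs
    have h2 := mul_le_mul_of_nonneg_left (le_abs_self (dot2 g s)) hpos.le
    simp [dot2] at *; linarith
  · have := he s hs
    have h2 := mul_le_mul_of_nonneg_left (neg_abs_le (dot2 g s)) hpos.le
    simp [dot2] at *; linarith
  · refine ⟨1/2, 1/2, by norm_num, by norm_num, by norm_num, ?_⟩
    ext <;> simp <;> ring

lemma tight_unique (S : Finset (ℝ × ℝ)) (f f' v w w' : ℝ × ℝ)
    (hf : ∀ s ∈ S, dot2 f s ≤ 1) (hf' : ∀ s ∈ S, dot2 f' s ≤ 1)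
    (hw : w ∈ S) (hw' : w' ∈ S) (h1 : dot2 f v = 1) (h2 : dot2 f w = 1)
    (h3 : 0 < v.1 * w.2 - v.2 * w.1) (h1' : dot2 f' v = 1) (h2' : dot2 f' w' = 1)
    (h3' : 0 < v.1 * w'.2 - v.2 * w'.1) : f = f' := by
  have a1 := hf w' hw'
  have a2 := hf' w hw
  obtain ⟨f1, f2⟩ := f
  obtain ⟨g1, g2⟩ := f'
  obtain ⟨v1, v2⟩ := v
  obtain ⟨w1, w2⟩ := w
  obtain ⟨u1, u2⟩ := w'
  simp only [dot2] at *
  -- f - f' = t * (-v2, v1)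
  have hv : 0 < v1 ^ 2 + v2 ^ 2 := by
    by_contra! h
    have : v1 = 0 := by nlinarith [sq_nonneg v1, sq_nonneg v2]
    have : v2 = 0 := by nlinarith [sq_nonneg v1, sq_nonneg v2]
    subst_vars; simp at h3
  obtain ⟨t, ht⟩ : ∃ t, t * (v1 ^ 2 + v2 ^ 2) = -(f1 - g1) * v2 + (f2 - g2) * v1 :=
    ⟨_, div_mul_cancel₀ _ hv.ne'⟩
  have e1 : f1 - g1 = -t * v2 := by
    apply mul_right_cancel₀ hv.ne'
    linear_combination v1 * (h1 - h1') + v2 * ht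
  have e2 : f2 - g2 = t * v1 := by
    apply mul_right_cancel₀ hv.ne'
    linear_combination v2 * (h1 - h1') - v1 * ht
  have b1 : t * (v1 * w2 - v2 * w1) ≥ 0 := by
    have : t * (v1 * w2 - v2 * w1) = (f1 - g1) * w1 + (f2 - g2) * w2 := by rw [e1, e2]; ring
    linarith
  have b2 : t * (v1 * u2 - v2 * u1) ≤ 0 := by
    have : t * (v1 * u2 - v2 * u1) = (f1 - g1) * u1 + (f2 - g2) * u2 := by rw [e1, e2]; ring
    linarith
  have t0 : t = 0 := le_antisymm (nonpos_of_mul_nonpos_left b2 h3') (nonneg_of_mul_nonneg_left b1 h3)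
  subst t0
  ext <;> simp <;> linarith

lemma halfplanes (S : Finset (ℝ × ℝ)) (hD : disc2 1 ⊆ convexHull ℝ (S : Set (ℝ × ℝ))) :
    ∃ F : Finset (ℝ × ℝ), F.card ≤ S.card ∧ (∀ f ∈ F, f.1 ^ 2 + f.2 ^ 2 ≤ 1) ∧
      ∀ x, (∀ f ∈ F, dot2 f x ≤ 1) → x ∈ convexHull ℝ (S : Set (ℝ × ℝ)) := by
  classical
  set K := {f : ℝ × ℝ | ∀ s ∈ S, dot2 f s ≤ 1} with hK
  have hKb : ∀ f ∈ K, f.1 ^ 2 + f.2 ^ 2 ≤ 1 := fun f hf =>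
    polar_bdd f fun p hp => hull_dot_le S f 1 (fun s hs => hf s hs) p (hD hp)
  have hKi : K = ⋂ s ∈ S, {f | dot2 s f ≤ 1} := by
    ext f; simp [hK, dot2_comm f]
  have hKclosed : IsClosed K := by
    rw [hKi]
    exact isClosed_biInter fun s _ => isClosed_le (dot2_cont s) continuous_const
  have hKconv : Convex ℝ K := by
    rw [hKi]
    exact convex_iInter₂ fun s _ => convex_halfSpace_le (dot2_lin s) 1
  have hKc : IsCompact K := by
    refine (isCompact_Icc (a := ((-1 : ℝ), (-1 : ℝ))) (b := (1, 1))).of_isClosed_subset hKclosed ?_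
    intro f hf
    have := hKb f hf
    refine ⟨⟨?_, ?_⟩, ⟨?_, ?_⟩⟩ <;> simp <;> nlinarith [sq_nonneg f.1, sq_nonneg f.2]
  have hex := fun (f : ℝ × ℝ) (hf : f ∈ Set.extremePoints ℝ K) => extreme_tight S f hf
  choose! v hv w hw h1 h2 h3 using hex
  have hmaps : Set.MapsTo v (Set.extremePoints ℝ K) (S : Set (ℝ × ℝ)) := fun f hf => hv f hf
  have hinj : Set.InjOn v (Set.extremePoints ℝ K) := by
    intro f hf f' hf' e
    refine tight_unique S f f' (v f) (w f) (w f') (extremePoints_subset hf)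
      (extremePoints_subset hf') (hw f hf) (hw f' hf') (h1 f hf) (h2 f hf) (h3 f hf) ?_ (h2 f' hf') ?_
    · rw [e]; exact h1 f' hf'
    · rw [e]; exact h3 f' hf'
  have hfin : (Set.extremePoints ℝ K).Finite := Set.Finite.of_injOn hmaps hinj S.finite_toSet
  refine ⟨hfin.toFinset, ?_, ?_, ?_⟩
  · exact Finset.card_le_card_of_injOn v (fun f hf => hv f (by simpa using hf)) (by simpa using hinj)
  · intro f hf
    exact hKb f (extremePoints_subset (by simpa using hf))
  · intro x hx
    by_contra hxn
    obtain ⟨g, u, hgu, hux⟩ := geometric_hahn_banach_closed_point (convex_convexHull ℝ (S : Set (ℝ × ℝ)))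
      (S.finite_toSet.isCompact_convexHull ℝ).isClosed hxn
    obtain ⟨f, hf⟩ := dual_rep g
    have hu : 0 < u := by
      have := hgu 0 (hD (by simp [disc2]))
      simpa using this
    have hKsub : K ⊆ {f | dot2 x f ≤ 1} := by
      rw [← closure_convexHull_extremePoints hKc hKconv]
      refine closure_minimal (convexHull_min ?_ (convex_halfSpace_le (dot2_lin x) 1))
        (isClosed_le (dot2_cont x) continuous_const)
      intro f hf
      simpa [dot2_comm x] using hx f (by simpa using hf)
    have hsm : ∀ p, dot2 (u⁻¹ • f) p = u⁻¹ * dot2 f p := fun p => by simp [dot2]; ring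
    have := hKsub (a := u⁻¹ • f) (fun s hs => by
      rw [hsm, ← hf, inv_mul_le_one₀ hu]
      exact (hgu s (subset_convexHull ℝ _ hs)).le)
    simp only [Set.mem_ofPred_eq] at this
    rw [dot2_comm, hsm, ← hf, inv_mul_le_one₀ hu] at this
    linarith

lemma vol_lin (α β γ δ : ℝ) (h : α * δ - β * γ ≠ 0) (s : Set (ℝ × ℝ)) :
    volume.real ((fun p : ℝ × ℝ => (α * p.1 + β * p.2, γ * p.1 + δ * p.2)) ⁻¹' s) =
      |(α * δ - β * γ)⁻¹| * volume.real s := by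
  set L := Matrix.toLin (Module.Basis.finTwoProd ℝ) (Module.Basis.finTwoProd ℝ) !![α, β; γ, δ] with hL
  have hd : LinearMap.det L = α * δ - β * γ := by
    rw [hL, LinearMap.det_toLin, Matrix.det_fin_two_of]
  have e : (fun p : ℝ × ℝ => (α * p.1 + β * p.2, γ * p.1 + δ * p.2)) = L := by
    funext p
    rw [hL, Matrix.toLin_finTwoProd_apply]
  rw [e, Measure.real, Measure.addHaar_preimage_linearMap volume (by rw [hd]; exact h), hd,
    ENNReal.toReal_mul, ENNReal.toReal_ofReal (abs_nonneg _), Measure.real]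

noncomputable def prim2 (R x : ℝ) : ℝ := R ^ 2 * Real.arcsin (x / R) + x * Real.sqrt (R ^ 2 - x ^ 2)

lemma prim2_deriv (R : ℝ) (hR : 0 < R) (x : ℝ) (h1 : -R < x) (h2 : x < R) :
    HasDerivAt (prim2 R) (2 * Real.sqrt (R ^ 2 - x ^ 2)) x := by
  have hpos : 0 < R ^ 2 - x ^ 2 := by nlinarith
  have hs : 0 < Real.sqrt (R ^ 2 - x ^ 2) := Real.sqrt_pos.2 hpos
  have hne1 : x / R ≠ -1 := by
    intro h; rw [div_eq_iff hR.ne'] at h; linarith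
  have hne2 : x / R ≠ 1 := by
    intro h; rw [div_eq_iff hR.ne'] at h; linarith
  have d1 := (Real.hasDerivAt_arcsin hne1 hne2).comp x ((hasDerivAt_id x).div_const R)
  have d2 := (((hasDerivAt_id x).pow 2).const_sub (R ^ 2)).sqrt (by simpa using hpos.ne')
  have d3 := (d1.const_mul (R ^ 2)).add ((hasDerivAt_id x).mul d2)
  have e : Real.sqrt (1 - (x / R) ^ 2) = Real.sqrt (R ^ 2 - x ^ 2) / R := by
    rw [show 1 - (x / R) ^ 2 = (R ^ 2 - x ^ 2) / R ^ 2 by field_simp, Real.sqrt_div hpos.le,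
      Real.sqrt_sq hR.le]
  convert! d3 using 1
  have e' : (id ^ 2 : ℝ → ℝ) x = x ^ 2 := by simp
  rw [e', e]
  simp only [id]
  have hsq := Real.sq_sqrt hpos.le
  generalize Real.sqrt (R ^ 2 - x ^ 2) = q at *
  simp
  field_simp
  linarith

lemma prim2_int (R c : ℝ) (hR : 0 < R) (hc : -R ≤ c) (hc' : c ≤ R) :
    ∫ x in c..R, 2 * Real.sqrt (R ^ 2 - x ^ 2) = prim2 R R - prim2 R c := by
  apply intervalIntegral.integral_eq_sub_of_hasDerivAt_of_le (f := prim2 R) hc'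
  · unfold prim2
    have := Real.continuous_arcsin
    fun_prop
  · intro x hx
    exact prim2_deriv R hR x (by linarith [hx.1]) hx.2
  · apply Continuous.intervalIntegrable
    fun_prop

lemma vol_sec (R c : ℝ) (hR : 0 < R) (hc : -R ≤ c) (hc' : c ≤ R) (s : Set (ℝ × ℝ))
    (hs : MeasurableSet s)
    (h1 : ∀ x ∈ Set.Ioc c R, Prod.mk x ⁻¹' s = Set.Icc (-Real.sqrt (R ^ 2 - x ^ 2)) (Real.sqrt (R ^ 2 - x ^ 2)))
    (h2 : ∀ x ∉ Set.Ioc c R, volume (Prod.mk x ⁻¹' s) = 0) :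
    volume.real s = prim2 R R - prim2 R c := by
  have e : volume s = ∫⁻ x in Set.Ioc c R, ENNReal.ofReal (2 * Real.sqrt (R ^ 2 - x ^ 2)) := by
    rw [Measure.volume_eq_prod, Measure.prod_apply hs, ← lintegral_indicator measurableSet_Ioc]
    congr 1
    funext x
    by_cases hx : x ∈ Set.Ioc c R
    · rw [h1 x hx, Set.indicator_of_mem hx, Real.volume_Icc]
      congr 1; ring
    · rw [h2 x hx, Set.indicator_of_notMem hx]
  have hcont : Continuous fun x : ℝ => 2 * Real.sqrt (R ^ 2 - x ^ 2) := by fun_prop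
  rw [Measure.real, e, ← ofReal_integral_eq_lintegral_ofReal
    ((hcont.intervalIntegrable c R).1) (Filter.Eventually.of_forall fun x => by positivity),
    ENNReal.toReal_ofReal (integral_nonneg fun x => by positivity),
    ← intervalIntegral.integral_of_le hc', prim2_int R c hR hc hc']

lemma disc2_sec (R x : ℝ) (hx : x ^ 2 ≤ R ^ 2) :
    Prod.mk x ⁻¹' (disc2 R) = Set.Icc (-Real.sqrt (R ^ 2 - x ^ 2)) (Real.sqrt (R ^ 2 - x ^ 2)) := by
  ext y
  simp only [disc2, Set.mem_preimage, Set.mem_ofPred_eq, Set.mem_Icc]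
  rw [← abs_le, Real.le_sqrt (abs_nonneg _) , sq_abs]
  · constructor <;> intro h <;> linarith
  all_goals linarith

lemma disc2_meas (R : ℝ) : MeasurableSet (disc2 R) := by
  apply IsClosed.measurableSet
  exact isClosed_le (by fun_prop) continuous_const

lemma cap2_meas (R : ℝ) (f) : MeasurableSet (cap2 R f) := by
  apply (disc2_meas R).inter
  exact (isOpen_lt continuous_const (dot2_cont f)).measurableSet

lemma vol_disc (R : ℝ) (hR : 0 < R) : volume.real (disc2 R) = Real.pi * R ^ 2 := by
  rw [vol_sec R (-R) hR le_rfl (by linarith) _ (disc2_meas R)]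
  · have : -R / R = -1 := by field_simp
    simp [prim2, this, div_self hR.ne']; ring
  · intro x hx
    exact disc2_sec R x (by nlinarith [hx.1, hx.2])
  · intro x hx
    by_cases h : x ^ 2 ≤ R ^ 2
    · rw [disc2_sec R x h]
      have h3 := abs_le_of_sq_le_sq' h hR.le
      have : x = -R := by
        by_contra hne
        exact hx ⟨lt_of_le_of_ne h3.1 (Ne.symm hne), h3.2⟩
      subst this
      simp
    · have : Prod.mk x ⁻¹' (disc2 R) = ∅ := by
        ext y
        simp only [disc2, Set.mem_preimage, Set.mem_ofPred_eq, Set.mem_empty_iff_false, iff_false]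
        nlinarith [sq_nonneg y]
      simp [this]

lemma vol_cap0 (R : ℝ) (hR : 1 ≤ R) : volume.real (cap2 R (1, 0)) = prim2 R R - prim2 R 1 := by
  apply vol_sec R 1 (by linarith) (by linarith) hR _ (cap2_meas R _)
  · intro x hx
    rw [← disc2_sec R x (by nlinarith [hx.1, hx.2])]
    ext y
    simp [cap2, dot2, hx.1]
  · intro x hx
    have : Prod.mk x ⁻¹' (cap2 R (1, 0)) = ∅ := by
      ext y
      simp only [cap2, disc2, dot2, Set.mem_preimage, Set.mem_ofPred_eq, Set.mem_empty_iff_false, iff_false]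
      rintro ⟨h1, h2⟩
      apply hx
      exact ⟨by linarith, by nlinarith [sq_nonneg y]⟩
    simp [this]

lemma vol_cap (R : ℝ) (hR : 1 ≤ R) (f : ℝ × ℝ) (hf : f.1 ^ 2 + f.2 ^ 2 = 1) :
    volume.real (cap2 R f) = prim2 R R - prim2 R 1 := by
  rw [← vol_cap0 R hR]
  have hd : f.1 * f.1 - f.2 * (-f.2) = 1 := by linarith
  have := vol_lin f.1 f.2 (-f.2) f.1 (by rw [hd]; norm_num) (cap2 R (1, 0))
  rw [hd] at this
  simp only [inv_one, abs_one, one_mul] at this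
  rw [← this]
  congr 1
  ext p
  simp only [cap2, disc2, dot2, Set.mem_preimage, Set.mem_ofPred_eq]
  have : (f.1 * p.1 + f.2 * p.2) ^ 2 + (-f.2 * p.1 + f.1 * p.2) ^ 2 = p.1 ^ 2 + p.2 ^ 2 := by
    linear_combination (p.1 ^ 2 + p.2 ^ 2) * hf
  rw [this]; simp

lemma disc2_fin (R : ℝ) (hR : 0 < R) : volume (disc2 R) ≠ ⊤ := by
  intro h
  have := vol_disc R hR
  rw [Measure.real, h] at this
  have : 0 < Real.pi * R ^ 2 := by positivity
  simp_all

lemma vol_cap_le (R : ℝ) (hR : 1 ≤ R) (f : ℝ × ℝ) (hf : f.1 ^ 2 + f.2 ^ 2 ≤ 1) :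
    volume.real (cap2 R f) ≤ prim2 R R - prim2 R 1 := by
  by_cases h0 : f.1 ^ 2 + f.2 ^ 2 = 0
  · have e1 : f.1 = 0 := by nlinarith [sq_nonneg f.1, sq_nonneg f.2]
    have e2 : f.2 = 0 := by nlinarith [sq_nonneg f.1, sq_nonneg f.2]
    have : cap2 R f = ∅ := by
      ext p
      simp [cap2, dot2, e1, e2]
    rw [this, ← vol_cap0 R hR]; simp
  · set r := Real.sqrt (f.1 ^ 2 + f.2 ^ 2) with hr
    have hr2 : r ^ 2 = f.1 ^ 2 + f.2 ^ 2 := Real.sq_sqrt (by positivity)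
    have hr1 : r ≤ 1 := by rw [hr]; exact Real.sqrt_le_one.2 hf
    have hpos : 0 < r := Real.sqrt_pos.2 (lt_of_le_of_ne (by positivity) (Ne.symm h0))
    rw [← vol_cap R hR (f.1 / r, f.2 / r) (by simp only [div_pow]; rw [← add_div, ← hr2]; field_simp)]
    apply measureReal_mono
    · rintro p ⟨hp1, hp2⟩
      refine ⟨hp1, ?_⟩
      simp only [dot2] at *
      rw [show f.1 / r * p.1 + f.2 / r * p.2 = (f.1 * p.1 + f.2 * p.2) / r by ring, lt_div_iff₀ hpos]
      linarith
    · exact ne_top_of_le_ne_top (disc2_fin R (by linarith)) (measure_mono fun p hp => hp.1)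

lemma cap_val (t : ℝ) (h0 : 0 < t) (h1 : t < Real.pi / 2) :
    prim2 (1 / Real.cos t) (1 / Real.cos t) - prim2 (1 / Real.cos t) 1 =
      (1 / Real.cos t) ^ 2 * t - Real.tan t := by
  have hc : 0 < Real.cos t := Real.cos_pos_of_mem_Ioo ⟨by linarith, h1⟩
  have hs : 0 < Real.tan t := Real.tan_pos_of_pos_of_lt_pi_div_two h0 h1
  have e : (1 / Real.cos t) ^ 2 - 1 ^ 2 = Real.tan t ^ 2 := by
    rw [Real.tan_eq_sin_div_cos]
    have := Real.sin_sq_add_cos_sq t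
    field_simp; linarith
  have e2 : Real.arcsin (Real.cos t) = Real.pi / 2 - t := by
    rw [← Real.sin_pi_div_two_sub, Real.arcsin_sin] <;> linarith
  unfold prim2
  rw [e, Real.sqrt_sq hs.le, sub_self, div_self (by positivity), one_div_one_div, e2]
  simp
  ring

lemma lower (n : ℕ) (t : ℝ) (h0 : 0 < t) (h1 : t < Real.pi / 2) (hnt : n * t = Real.pi)
    (S : Finset (ℝ × ℝ)) (hS : S.card ≤ n) (hD : disc2 1 ⊆ convexHull ℝ (S : Set (ℝ × ℝ))) :
    n * Real.tan t ≤ volume.real (convexHull ℝ (S : Set (ℝ × ℝ))) := by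
  have hc : 0 < Real.cos t := Real.cos_pos_of_mem_Ioo ⟨by linarith, h1⟩
  set R := 1 / Real.cos t with hRdef
  have hR : 1 ≤ R := by rw [hRdef, le_div_iff₀ hc]; linarith [Real.cos_le_one t]
  obtain ⟨F, hF, hF1, hF2⟩ := halfplanes S hD
  have hsub : disc2 R ⊆ convexHull ℝ (S : Set (ℝ × ℝ)) ∪ ⋃ f ∈ F, cap2 R f := by
    intro x hx
    by_cases h : ∀ f ∈ F, dot2 f x ≤ 1
    · exact Or.inl (hF2 x h)
    · push Not at h
      obtain ⟨f, hf, h⟩ := h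
      exact Or.inr (Set.mem_biUnion hf ⟨hx, h⟩)
  have hcapfin : ∀ f, volume (cap2 R f) ≠ ⊤ := fun f =>
    ne_top_of_le_ne_top (disc2_fin R (by linarith)) (measure_mono fun p hp => hp.1)
  have hPfin : volume (convexHull ℝ (S : Set (ℝ × ℝ))) ≠ ⊤ :=
    (S.finite_toSet.isCompact_convexHull ℝ).measure_ne_top
  have hUfin : volume (⋃ f ∈ F, cap2 R f) ≠ ⊤ :=
    ne_top_of_le_ne_top (disc2_fin R (by linarith)) (measure_mono (Set.iUnion₂_subset fun f _ p hp => hp.1))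
  have k1 := measureReal_mono (μ := volume) hsub (by
    exact ne_top_of_le_ne_top (ENNReal.add_ne_top.2 ⟨hPfin, hUfin⟩) (measure_union_le _ _))
  have k2 := measureReal_union_le (μ := volume) (convexHull ℝ (S : Set (ℝ × ℝ))) (⋃ f ∈ F, cap2 R f)
  have k3 := measureReal_biUnion_finset_le (μ := volume) F (fun f => cap2 R f)
  have k4 : ∑ f ∈ F, volume.real (cap2 R f) ≤ F.card • (prim2 R R - prim2 R 1) :=
    Finset.sum_le_card_nsmul _ _ _ fun f hf => vol_cap_le R hR f (hF1 f hf)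
  have hnn : 0 ≤ prim2 R R - prim2 R 1 := by rw [← vol_cap0 R hR]; exact measureReal_nonneg
  have k5 : F.card • (prim2 R R - prim2 R 1) ≤ n * (prim2 R R - prim2 R 1) := by
    rw [nsmul_eq_mul]
    exact mul_le_mul_of_nonneg_right (by exact_mod_cast hF.trans hS) hnn
  rw [vol_disc R (by linarith)] at k1
  have hv := cap_val t h0 h1
  rw [← hRdef] at hv
  rw [hv] at k4 k5
  have : n * (R ^ 2 * t - Real.tan t) = Real.pi * R ^ 2 - n * Real.tan t := by rw [← hnt]; ring
  linarith

lemma cos_le_aux (t x : ℝ) (h0 : 0 ≤ t) (h1 : t ≤ x) (h2 : x ≤ 2 * Real.pi - t) :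
    Real.cos x ≤ Real.cos t := by
  rcases le_total x Real.pi with h | h
  · exact Real.cos_le_cos_of_nonneg_of_le_pi h0 h h1
  · rw [← Real.cos_two_pi_sub x]
    exact Real.cos_le_cos_of_nonneg_of_le_pi h0 (by linarith) (by linarith)

lemma disc2_convex (R : ℝ) : Convex ℝ (disc2 R) := by
  intro x hx y hy a b ha hb hab
  simp only [disc2, Set.mem_ofPred_eq] at *
  simp
  have hb' : b = 1 - a := by linarith
  subst hb'
  nlinarith [mul_nonneg (mul_nonneg ha hb) (sq_nonneg (x.1 - y.1)),
    mul_nonneg (mul_nonneg ha hb) (sq_nonneg (x.2 - y.2)),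
    mul_le_mul_of_nonneg_left hx ha, mul_le_mul_of_nonneg_left hy hb]

lemma dot2_sq_le (f p : ℝ × ℝ) : dot2 f p ^ 2 ≤ (f.1 ^ 2 + f.2 ^ 2) * (p.1 ^ 2 + p.2 ^ 2) := by
  simp only [dot2]
  nlinarith [sq_nonneg (f.1 * p.2 - f.2 * p.1)]

lemma polar_rep (f : ℝ × ℝ) : ∃ r θ : ℝ, 0 ≤ r ∧ 0 ≤ θ ∧ θ < 2 * Real.pi ∧
    f = (r * Real.cos θ, r * Real.sin θ) := by
  set z : ℂ := ⟨f.1, f.2⟩ with hz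
  have e1 : f.1 = ‖z‖ * Real.cos z.arg := by rw [Complex.norm_mul_cos_arg]
  have e2 : f.2 = ‖z‖ * Real.sin z.arg := by rw [Complex.norm_mul_sin_arg]
  have hp := Real.pi_pos
  have l1 := Complex.neg_pi_lt_arg z
  have l2 := Complex.arg_le_pi z
  rcases le_or_gt 0 z.arg with h | h
  · exact ⟨‖z‖, z.arg, norm_nonneg _, h, by linarith, Prod.ext e1 e2⟩
  · refine ⟨‖z‖, z.arg + 2 * Real.pi, norm_nonneg _, by linarith, by linarith, ?_⟩
    rw [Real.cos_add_two_pi, Real.sin_add_two_pi]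
    exact Prod.ext e1 e2

lemma upper (n : ℕ) (t : ℝ) (h0 : 0 < t) (h1 : t < Real.pi / 2) (hnt : n * t = Real.pi) :
    ∃ S : Finset (ℝ × ℝ), S.card ≤ n ∧ disc2 1 ⊆ convexHull ℝ (S : Set (ℝ × ℝ)) ∧
    volume.real (convexHull ℝ (S : Set (ℝ × ℝ))) ≤ n * Real.tan t := by
  classical
  have hc : 0 < Real.cos t := Real.cos_pos_of_mem_Ioo ⟨by linarith, h1⟩
  obtain ⟨R, hRdef⟩ : ∃ R, R = 1 / Real.cos t := ⟨_, rfl⟩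
  have hR : 1 ≤ R := by rw [hRdef, le_div_iff₀ hc]; linarith [Real.cos_le_one t]
  have hRc : R * Real.cos t = 1 := by rw [hRdef]; field_simp
  let V : ℕ → ℝ × ℝ := fun k => (R * Real.cos ((2 * k + 1) * t), R * Real.sin ((2 * k + 1) * t))
  let U : ℕ → ℝ × ℝ := fun k => (Real.cos (2 * k * t), Real.sin (2 * k * t))
  have hU : ∀ k, (U k).1 ^ 2 + (U k).2 ^ 2 = 1 := fun k => Real.cos_sq_add_sin_sq _
  refine ⟨(Finset.range n).image V, Finset.card_image_le.trans (by simp), ?_, ?_⟩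
  · intro x hx
    by_contra hxn
    obtain ⟨g, u, hgu, hux⟩ := geometric_hahn_banach_closed_point (convex_convexHull ℝ _)
      (((Finset.range n).image V).finite_toSet.isCompact_convexHull ℝ).isClosed hxn
    obtain ⟨f, hf⟩ := dual_rep g
    obtain ⟨r, θ, hr, hθ0, hθ1, hfe⟩ := polar_rep f
    have hle : dot2 f x ≤ r := by
      apply le_of_sq_le_sq _ hr
      refine (dot2_sq_le f x).trans ?_
      have : f.1 ^ 2 + f.2 ^ 2 = r ^ 2 := by
        rw [hfe]; simp only; linear_combination r ^ 2 * Real.cos_sq_add_sin_sq θ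
      rw [this]
      simp only [disc2, Set.mem_ofPred_eq] at hx
      nlinarith [sq_nonneg r]
    have hk0 : 0 ≤ θ / (2 * t) := by positivity
    have f1 := Nat.floor_le hk0
    have f2 := Nat.lt_floor_add_one (θ / (2 * t))
    set k := ⌊θ / (2 * t)⌋₊
    have ht2 : 0 < 2 * t := by linarith
    rw [le_div_iff₀ ht2] at f1
    rw [div_lt_iff₀ ht2] at f2
    have hk : k < n := by
      have : (k : ℝ) < n := by
        by_contra! h
        nlinarith
      exact_mod_cast this
    have hV := hgu (V k) (subset_convexHull ℝ _ (by
      simp only [Finset.coe_image]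
      exact ⟨k, by simpa using hk, rfl⟩))
    rw [hf] at hV hux
    have e : dot2 f (V k) = r * R * Real.cos (θ - (2 * k + 1) * t) := by
      rw [hfe, Real.cos_sub]; simp only [dot2, V]; ring
    have hcos : Real.cos t ≤ Real.cos (θ - (2 * k + 1) * t) := by
      rw [← Real.cos_abs (θ - (2 * k + 1) * t)]
      apply Real.cos_le_cos_of_nonneg_of_le_pi (abs_nonneg _) (by linarith)
      rw [abs_le]; constructor <;> linarith
    have : r * R * Real.cos t ≤ r * R * Real.cos (θ - (2 * k + 1) * t) :=
      mul_le_mul_of_nonneg_left hcos (by positivity)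
    have : r * R * Real.cos t = r := by rw [mul_assoc, hRc, mul_one]
    linarith
  · set P := convexHull ℝ (((Finset.range n).image V : Finset (ℝ × ℝ)) : Set (ℝ × ℝ)) with hP
    have hPD : P ⊆ disc2 R := by
      refine convexHull_min ?_ (disc2_convex R)
      intro v hv
      simp only [Finset.coe_image] at hv
      obtain ⟨k, _, rfl⟩ := hv
      simp only [disc2, V, Set.mem_ofPred_eq]
      apply le_of_eq
      linear_combination R ^ 2 * Real.cos_sq_add_sin_sq ((2 * k + 1) * t)
    have hPU : ∀ k < n, ∀ p ∈ P, dot2 (U k) p ≤ 1 := by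
      intro k hk
      apply hull_dot_le
      intro v hv
      simp only [Finset.coe_image] at hv
      obtain ⟨j, hj, rfl⟩ := hv
      have hj : j < n := by simpa using hj
      have e : dot2 (U k) (V j) = R * Real.cos ((2 * j + 1) * t - 2 * k * t) := by
        rw [Real.cos_sub]; simp only [dot2, V, U]; ring
      rw [e]
      refine le_of_le_of_eq ?_ hRc
      apply mul_le_mul_of_nonneg_left _ (by linarith)
      have hj' : (j : ℝ) + 1 ≤ n := by exact_mod_cast hj
      have hk' : (k : ℝ) + 1 ≤ n := by exact_mod_cast hk
      have hj0 : (0 : ℝ) ≤ j := by positivity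
      have hk0 : (0 : ℝ) ≤ k := by positivity
      rcases le_or_gt k j with h | h
      · have h : (k : ℝ) ≤ j := by exact_mod_cast h
        apply cos_le_aux _ _ h0.le <;> nlinarith
      · have h : (j : ℝ) + 1 ≤ k := by exact_mod_cast h
        rw [← Real.cos_neg]
        apply cos_le_aux _ _ h0.le <;> nlinarith
    have hdisj : Set.PairwiseDisjoint (↑(Finset.range n)) (fun k => cap2 R (U k)) := by
      have key : ∀ j k : ℕ, j < k → k < n → Disjoint (cap2 R (U j)) (cap2 R (U k)) := by
        intro j k hjk hk
        rw [Set.disjoint_left]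
        rintro p ⟨hp, hp1⟩ ⟨_, hp2⟩
        have hjk : (j : ℝ) + 1 ≤ k := by exact_mod_cast hjk
        have hk' : (k : ℝ) + 1 ≤ n := by exact_mod_cast hk
        have hj0 : (0 : ℝ) ≤ j := by positivity
        have hcos : Real.cos (2 * k * t - 2 * j * t) ≤ Real.cos (2 * t) := by
          apply cos_le_aux _ _ (by linarith) <;> nlinarith
        have hs := dot2_sq_le (U j + U k) p
        have e1 : dot2 (U j + U k) p = dot2 (U j) p + dot2 (U k) p := by simp [dot2]; ring
        have e2 : (U j + U k).1 ^ 2 + (U j + U k).2 ^ 2 = 2 + 2 * Real.cos (2 * k * t - 2 * j * t) := by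
          have a1 := hU j
          have a2 := hU k
          rw [Real.cos_sub]
          simp only [U, Prod.fst_add, Prod.snd_add] at *
          linear_combination a1 + a2
        rw [e1, e2] at hs
        have hle : 2 + 2 * Real.cos (2 * k * t - 2 * j * t) ≤ 4 * Real.cos t ^ 2 := by
          rw [Real.cos_two_mul] at hcos; linarith
        have hp : p.1 ^ 2 + p.2 ^ 2 ≤ R ^ 2 := hp
        have h4 : (2 + 2 * Real.cos (2 * k * t - 2 * j * t)) * (p.1 ^ 2 + p.2 ^ 2) ≤
            4 * Real.cos t ^ 2 * R ^ 2 := mul_le_mul hle hp (by positivity) (by positivity)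
        have h5 : 4 * Real.cos t ^ 2 * R ^ 2 = 4 := by
          linear_combination 4 * (R * Real.cos t + 1) * hRc
        nlinarith
      intro j hj k hk hne
      have hj : j < n := by simpa using hj
      have hk : k < n := by simpa using hk
      rcases lt_or_gt_of_ne hne with h | h
      · exact key j k h hk
      · exact (key k j h hj).symm
    have hcapfin : ∀ f, volume (cap2 R f) ≠ ⊤ := fun f =>
      ne_top_of_le_ne_top (disc2_fin R (by linarith)) (measure_mono fun p hp => hp.1)
    have hsum : volume.real (⋃ k ∈ Finset.range n, cap2 R (U k)) = n * (prim2 R R - prim2 R 1) := by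
      rw [measureReal_biUnion_finset hdisj (fun k _ => cap2_meas R _) (fun k _ => hcapfin _)]
      rw [Finset.sum_congr rfl fun k _ => vol_cap R hR (U k) (hU k)]
      rw [Finset.sum_const, Finset.card_range, nsmul_eq_mul]
    have hd2 : Disjoint P (⋃ k ∈ Finset.range n, cap2 R (U k)) := by
      rw [Set.disjoint_left]
      intro p hp hp2
      simp only [Set.mem_iUnion] at hp2
      obtain ⟨k, hk, hp2⟩ := hp2
      have := hPU k (by simpa using hk) p hp
      linarith [hp2.2]
    have hUD : (⋃ k ∈ Finset.range n, cap2 R (U k)) ⊆ disc2 R :=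
      Set.iUnion₂_subset fun f _ p hp => hp.1
    have hfin := disc2_fin R (by linarith)
    have k1 := measureReal_union (μ := volume) hd2
      (Finset.measurableSet_biUnion _ fun k _ => cap2_meas R _)
      (ne_top_of_le_ne_top hfin (measure_mono hPD)) (ne_top_of_le_ne_top hfin (measure_mono hUD))
    have k2 := measureReal_mono (μ := volume) (Set.union_subset hPD hUD) hfin
    rw [k1, hsum, vol_disc R (by linarith)] at k2
    have hv := cap_val t h0 h1
    rw [← hRdef] at hv
    rw [hv] at k2
    have : n * (R ^ 2 * t - Real.tan t) = Real.pi * R ^ 2 - n * Real.tan t := by rw [← hnt]; ring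
    linarith

lemma vol_scale (a b : ℝ) (ha : 0 < a) (hb : 0 < b) (s : Set (ℝ × ℝ)) :
    volume.real ((fun p : ℝ × ℝ => (a * p.1, b * p.2)) ⁻¹' s) = (a * b)⁻¹ * volume.real s := by
  have := vol_lin a 0 0 b (by simp [ha.ne', hb.ne']) s
  simp only [zero_mul, add_zero, zero_add, mul_zero, sub_zero] at this
  rw [this, abs_of_pos (by positivity)]

lemma hull_scale (a b : ℝ) (ha : 0 < a) (hb : 0 < b) (S : Finset (ℝ × ℝ)) :
    (fun p : ℝ × ℝ => (a * p.1, b * p.2)) ⁻¹' (convexHull ℝ (S : Set (ℝ × ℝ))) =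
      convexHull ℝ ((S.image (fun p : ℝ × ℝ => (a⁻¹ * p.1, b⁻¹ * p.2)) : Finset (ℝ × ℝ)) : Set (ℝ × ℝ)) := by
  have hl : IsLinearMap ℝ (fun p : ℝ × ℝ => (a⁻¹ * p.1, b⁻¹ * p.2)) :=
    ⟨fun x y => by ext <;> simp <;> ring, fun c x => by ext <;> simp <;> ring⟩
  rw [Finset.coe_image, ← hl.image_convexHull]
  ext p
  constructor
  · intro hp
    exact ⟨_, hp, by ext <;> simp <;> field_simp⟩
  · rintro ⟨q, hq, rfl⟩
    have : ((a * (a⁻¹ * q.1), b * (b⁻¹ * q.2)) : ℝ × ℝ) = q := by ext <;> simp <;> field_simp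
    simpa [this] using hq

lemma ell_scale (a b : ℝ) (ha : 0 < a) (hb : 0 < b) :
    (fun p : ℝ × ℝ => (a * p.1, b * p.2)) ⁻¹' {p : ℝ × ℝ | p.1 ^ 2 / a ^ 2 + p.2 ^ 2 / b ^ 2 ≤ 1} = disc2 1 := by
  ext p
  simp only [disc2, Set.mem_preimage, Set.mem_ofPred_eq]
  rw [mul_pow, mul_pow, mul_div_cancel_left₀ _ (by positivity), mul_div_cancel_left₀ _ (by positivity)]
  simp

theorem stmt_18 (a b : ℝ) (ha : 0 < a) (hb : 0 < b)
    (E : Set (ℝ × ℝ)) (hE : E = {p : ℝ × ℝ | p.1 ^ 2 / a ^ 2 + p.2 ^ 2 / b ^ 2 ≤ 1})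
    (n : ℕ) (hn : 3 ≤ n) :
    sInf { A : ℝ | ∃ S : Finset (ℝ × ℝ), S.card ≤ n ∧
        E ⊆ convexHull ℝ (S : Set (ℝ × ℝ)) ∧
        A = (volume (convexHull ℝ (S : Set (ℝ × ℝ)))).toReal } =
      (n : ℝ) * a * b * Real.tan (Real.pi / n) ∧
    sInf { A : ℝ | ∃ S : Finset (ℝ × ℝ), S.card ≤ n ∧
        E ⊆ convexHull ℝ (S : Set (ℝ × ℝ)) ∧
        A = (volume (convexHull ℝ (S : Set (ℝ × ℝ)))).toReal } -
      (volume E).toReal =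
      (n : ℝ) * a * b * Real.tan (Real.pi / n) - Real.pi * a * b := by
  have hn' : (3 : ℝ) ≤ n := by exact_mod_cast hn
  have hpi := Real.pi_pos
  have h0 : 0 < Real.pi / n := by positivity
  have h1 : Real.pi / n < Real.pi / 2 := by
    apply div_lt_div_of_pos_left hpi <;> linarith
  have hnt : n * (Real.pi / n) = Real.pi := by field_simp
  have hvE : (volume E).toReal = Real.pi * a * b := by
    have := vol_scale a b ha hb E
    rw [hE, ell_scale a b ha hb, vol_disc 1 one_pos, ← hE, Measure.real] at this
    field_simp at this
    linarith
  have main : IsLeast { A : ℝ | ∃ S : Finset (ℝ × ℝ), S.card ≤ n ∧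
        E ⊆ convexHull ℝ (S : Set (ℝ × ℝ)) ∧
        A = (volume (convexHull ℝ (S : Set (ℝ × ℝ)))).toReal }
      ((n : ℝ) * a * b * Real.tan (Real.pi / n)) := by
    have low : ∀ S : Finset (ℝ × ℝ), S.card ≤ n → E ⊆ convexHull ℝ (S : Set (ℝ × ℝ)) →
        (n : ℝ) * a * b * Real.tan (Real.pi / n) ≤ (volume (convexHull ℝ (S : Set (ℝ × ℝ)))).toReal := by
      intro S hS hES
      have hD : disc2 1 ⊆ (fun p : ℝ × ℝ => (a * p.1, b * p.2)) ⁻¹' (convexHull ℝ (S : Set (ℝ × ℝ))) := by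
        rw [← ell_scale a b ha hb, ← hE]
        exact Set.preimage_mono hES
      have hv := vol_scale a b ha hb (convexHull ℝ (S : Set (ℝ × ℝ)))
      rw [hull_scale a b ha hb] at hD hv
      have := lower n _ h0 h1 hnt _ (Finset.card_image_le.trans hS) hD
      rw [hv, inv_mul_eq_div, le_div_iff₀ (by positivity), Measure.real] at this
      linarith
    refine ⟨?_, ?_⟩
    · obtain ⟨S, hS, hD, hv⟩ := upper n _ h0 h1 hnt
      have hs1 := hull_scale a⁻¹ b⁻¹ (inv_pos.2 ha) (inv_pos.2 hb) S
      have hv1 := vol_scale a⁻¹ b⁻¹ (inv_pos.2 ha) (inv_pos.2 hb) (convexHull ℝ (S : Set (ℝ × ℝ)))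
      rw [hs1] at hv1
      have hsub : E ⊆ convexHull ℝ ((S.image (fun p : ℝ × ℝ => (a⁻¹⁻¹ * p.1, b⁻¹⁻¹ * p.2)) : Finset (ℝ × ℝ)) : Set (ℝ × ℝ)) := by
        rw [← hs1]
        intro p hp
        apply hD
        rw [hE] at hp
        simp only [disc2, Set.mem_ofPred_eq] at *
        rw [mul_pow, mul_pow, inv_pow, inv_pow, inv_mul_eq_div, inv_mul_eq_div]
        simpa using hp
      have hcard := (Finset.card_image_le
        (s := S) (f := (fun p : ℝ × ℝ => (a⁻¹⁻¹ * p.1, b⁻¹⁻¹ * p.2)))).trans hS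
      refine ⟨_, hcard, hsub, le_antisymm (low _ hcard hsub) ?_⟩
      rw [Measure.real] at hv1
      rw [hv1, show (a⁻¹ * b⁻¹)⁻¹ = a * b by field_simp]
      have := mul_le_mul_of_nonneg_left hv (show 0 ≤ a * b by positivity)
      linarith
    · rintro A ⟨S, hS, hES, rfl⟩
      exact low S hS hES
  have hs := main.csInf_eq
  exact ⟨hs, by rw [hs, hvE]⟩
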